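/- Let π* be an optimal assignment for weights w and let δ be an allowable perturbation for (w, π*). Then δ is critical if and only if s_{w+δ}(a,b) = 0 for every edge (a,b), where s_{w+δ} denotes the element-wise sensitivities computed with weights w + δ and assignment π*. -/

import Mathlib

open Finset Filter Topology

/-- Cost of an assignment `π : T → A` under weights `w : A × T → ℝ`. -/
noncomputable def cost {A T : Type*} [Fintype T] (w : A × T → ℝ) (π : T → A) : ℝ :=
  ∑ b : T, w (π b, b)

/-- `πs` is an optimal assignment for weights `w`: it is injective (an assignment)
and minimizes the cost among all assignments. -/
def Optimal {A T : Type*} [Fintype T] (w : A × T → ℝ) (πs : T → A) : Prop :=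
  Function.Injective πs ∧ ∀ π : T → A, Function.Injective π → cost w πs ≤ cost w π

/-- `δ` is an allowable perturbation for `(w, πs)`: `πs` remains optimal for `w + δ`. -/
def Allowable {A T : Type*} [Fintype T] (w δ : A × T → ℝ) (πs : T → A) : Prop :=
  Optimal (w + δ) πs

-- The element-wise sensitivity of edge `(a, b)` for weights `w` and assignment `πs`.
open Classical in
noncomputable def sens {A T : Type*} [Fintype T] (w : A × T → ℝ) (πs : T → A)
    (a : A) (b : T) : ℝ :=
  if πs b = a then
    sInf {c | ∃ π : T → A, Function.Injective π ∧ π b ≠ a ∧ cost w π = c} - cost w πs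
  else
    cost w πs - sInf {c | ∃ π : T → A, Function.Injective π ∧ π b = a ∧ cost w π = c}

-- An allowable perturbation `δ` for `(w, πs)` is critical if increasing it by any `ε > 0`
-- on an assigned edge (resp. decreasing by `ε` on an unassigned edge) destroys allowability.
open Classical in
def Critical {A T : Type*} [Fintype T] (w δ : A × T → ℝ) (πs : T → A) : Prop :=
  ∀ (i : A) (j : T), ∀ ε > (0 : ℝ),
    ¬ Allowable w
      (fun e => if e = (i, j) then (if πs j = i then δ e + ε else δ e - ε) else δ e) πs

/-!
A push of size `ε` at an edge raises the cost of `πs`, relative to the assignments that disagree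
with `πs` about that edge, by exactly `ε`, and leaves the assignments that agree with it untouched.
Hence `πs` survives the push if and only if `ε ≤ |sens|`: the absolute sensitivity is the largest
allowable push, and no positive push is allowable exactly when it vanishes.
-/

section Rivals

variable {A T : Type*}

/-- The rivals of `πs` at the edge `(i, j)`: the assignments that disagree with `πs` about whether
`(i, j)` is assigned. They unify the two sets over which the sensitivity takes its minimum. -/
def rivals (πs : T → A) (i : A) (j : T) : Set (T → A) :=
  {π | Function.Injective π ∧ (π j = i ↔ πs j ≠ i)}

theorem exists_injective_apply_eq {f : T → A} (hf : Function.Injective f) (j : T) (i : A) :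
    ∃ g : T → A, Function.Injective g ∧ g j = i := by
  classical
  exact ⟨Equiv.swap (f j) i ∘ f, (Equiv.injective _).comp hf, Equiv.swap_apply_left _ _⟩

theorem rivals_nonempty [Nontrivial A] {πs : T → A} (hπs : Function.Injective πs) (i : A) (j : T) :
    (rivals πs i j).Nonempty := by
  obtain ⟨k, hk⟩ : ∃ k, k = i ↔ πs j ≠ i := by
    by_cases h : πs j = i
    · simpa [h] using exists_ne i
    · exact ⟨i, by simp [h]⟩
  obtain ⟨π, hπ, rfl⟩ := exists_injective_apply_eq hπs j k
  exact ⟨π, hπ, hk⟩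

end Rivals

section Sensitivity

variable {A T : Type*} [Fintype T] {v : A × T → ℝ} {πs : T → A} {i : A} {j : T}

theorem sens_of_eq (h : πs j = i) :
    sens v πs i j = sInf (cost v '' rivals πs i j) - cost v πs := by
  simp [sens, rivals, h, Set.image, and_assoc]

theorem sens_of_ne (h : πs j ≠ i) :
    sens v πs i j = cost v πs - sInf (cost v '' rivals πs i j) := by
  simp [sens, rivals, h, Set.image, and_assoc]

theorem Optimal.cost_mem_lowerBounds_image_rivals (hπs : Optimal v πs) :
    cost v πs ∈ lowerBounds (cost v '' rivals πs i j) := by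
  rintro _ ⟨π, hπ, rfl⟩
  exact hπs.2 π hπ.1

theorem Optimal.abs_sens [Nontrivial A] (hπs : Optimal v πs) :
    |sens v πs i j| = sInf (cost v '' rivals πs i j) - cost v πs := by
  have hle : cost v πs ≤ sInf (cost v '' rivals πs i j) :=
    le_csInf ((rivals_nonempty hπs.1 i j).image _)
      hπs.cost_mem_lowerBounds_image_rivals
  by_cases h : πs j = i
  · rw [sens_of_eq h, abs_of_nonneg (sub_nonneg.2 hle)]
  · rw [sens_of_ne h, abs_of_nonpos (sub_nonpos.2 hle), neg_sub]

theorem Optimal.le_abs_sens_iff [Nontrivial A] (hπs : Optimal v πs) {ε : ℝ} :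
    ε ≤ |sens v πs i j| ↔ ∀ π ∈ rivals πs i j, cost v πs + ε ≤ cost v π := by
  rw [hπs.abs_sens, le_sub_iff_add_le',
    le_csInf_iff ⟨_, hπs.cost_mem_lowerBounds_image_rivals⟩
      ((rivals_nonempty hπs.1 i j).image _),
    Set.forall_mem_image]

end Sensitivity

section EdgePush

variable {A T : Type*}

open Classical in
/-- The push of size `ε` against `πs` at the edge `(i, j)`: the perturbation of this one edge that
makes it dearer by `ε` if `πs` assigns it and cheaper by `ε` otherwise, as in the definition of a
critical perturbation. -/
noncomputable def edgePush (πs : T → A) (i : A) (j : T) (ε : ℝ) : A × T → ℝ :=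
  Pi.single (i, j) (if πs j = i then ε else -ε)

variable [Fintype T]

theorem critical_iff_not_optimal_add_edgePush {w δ : A × T → ℝ} {πs : T → A} :
    Critical w δ πs ↔ ∀ i j, ∀ ε > 0, ¬ Optimal (w + δ + edgePush πs i j ε) πs := by
  refine forall₄_congr fun i j ε _ => not_congr (iff_of_eq ?_)
  rw [Allowable, add_assoc]
  congr! 2
  funext e
  simp only [edgePush, Pi.add_apply, Pi.single_apply]
  split_ifs <;> ring

theorem cost_add (v u : A × T → ℝ) (π : T → A) : cost (v + u) π = cost v π + cost u π :=
  Finset.sum_add_distrib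

open Classical in
theorem cost_single (i : A) (j : T) (c : ℝ) (π : T → A) :
    cost (Pi.single (i, j) c) π = if π j = i then c else 0 := by
  simp [cost, Pi.single_apply, Prod.ext_iff, and_comm (b := _ = j), ite_and]

variable {πs π : T → A} {i : A} {j : T} {ε : ℝ}

theorem cost_edgePush_of_mem_rivals (hπ : π ∈ rivals πs i j) :
    cost (edgePush πs i j ε) π = cost (edgePush πs i j ε) πs - ε := by
  by_cases h : πs j = i <;> simp [edgePush, cost_single, hπ.2, h]

theorem cost_edgePush_congr (hπ : π j = i ↔ πs j = i) :
    cost (edgePush πs i j ε) π = cost (edgePush πs i j ε) πs := by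
  by_cases h : πs j = i <;> simp [edgePush, cost_single, hπ, h]

theorem Optimal.add_edgePush_iff {v : A × T → ℝ} (hπs : Optimal v πs) :
    Optimal (v + edgePush πs i j ε) πs ↔ ∀ π ∈ rivals πs i j, cost v πs + ε ≤ cost v π := by
  simp only [Optimal, cost_add]
  refine ⟨fun h π hπ => ?_, fun h => ⟨hπs.1, fun π hπ => ?_⟩⟩
  · have hle := h.2 π hπ.1
    rw [cost_edgePush_of_mem_rivals hπ] at hle
    linarith
  · by_cases hagree : π j = i ↔ πs j = i
    · rw [cost_edgePush_congr hagree]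
      exact add_le_add_left (hπs.2 π hπ) _
    · have hrival : π ∈ rivals πs i j := ⟨hπ, by tauto⟩
      rw [cost_edgePush_of_mem_rivals hrival]
      linarith [h π hrival]

theorem Optimal.add_edgePush_iff_le_abs_sens [Nontrivial A] {v : A × T → ℝ}
    (hπs : Optimal v πs) :
    Optimal (v + edgePush πs i j ε) πs ↔ ε ≤ |sens v πs i j| :=
  hπs.add_edgePush_iff.trans hπs.le_abs_sens_iff.symm

end EdgePush

theorem stmt11_general {A T : Type*} [Nontrivial A] [Fintype T] (w δ : A × T → ℝ) (πs : T → A)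
    (hδ : Allowable w δ πs) :
    Critical w δ πs ↔ ∀ a b, sens (w + δ) πs a b = 0 := by
  rw [critical_iff_not_optimal_add_edgePush]
  refine forall₂_congr fun a b => ?_
  calc (∀ ε > 0, ¬ Optimal (w + δ + edgePush πs a b ε) πs)
      ↔ ∀ ε > 0, |sens (w + δ) πs a b| < ε := by
        simp only [Optimal.add_edgePush_iff_le_abs_sens hδ, not_le]
    _ ↔ |sens (w + δ) πs a b| ≤ 0 := forall_gt_iff_le
    _ ↔ sens (w + δ) πs a b = 0 := abs_nonpos_iff

theorem stmt11 {A T : Type*} [Fintype A] [Fintype T] [Nonempty A] [Nonempty T]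
    (hT : 2 ≤ Fintype.card T) (hAT : Fintype.card T ≤ Fintype.card A)
    (w δ : A × T → ℝ) (πs : T → A)
    (hopt : Optimal w πs)
    (hδ : Allowable w δ πs) :
    Critical w δ πs ↔ ∀ a b, sens (w + δ) πs a b = 0 := by
  have : Nontrivial A := Fintype.one_lt_card_iff_nontrivial.1 (hT.trans hAT)
  exact stmt11_general w δ πs hδ
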